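/- Let B ∈ ℝ^{k×r}, A ∈ ℝ^{r×d}, G ∈ ℝ^{k×d}, let η ≥ 0, L ≥ 0, and constants C_A, C_B, Γ, c_A, c_B satisfy ‖A‖_F ≤ C_A, ‖B‖_F ≤ C_B, ‖G‖_F ≤ Γ, ⟨Aᵀ A, Gᵀ G⟩_F ≥ c_A ‖G‖_F², and ⟨G Gᵀ, B Bᵀ⟩_F ≥ c_B ‖G‖_F². Set D := (B − η G Aᵀ)(A − η Bᵀ G) − B A, and let f_W, f_U ∈ ℝ be real numbers satisfying the smoothness inequality f_U ≤ f_W + ⟨D, G⟩_F + (L/2) ‖D‖_F². Then f_U ≤ f_W + η² C_A C_B Γ³ + (3L/2)(η⁴ C_A² C_B² Γ⁴ + η² C_A⁴ Γ² + η² C_B⁴ Γ²) − η (c_A + c_B) ‖G‖_F². -/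

import Mathlib

open Matrix

attribute [local instance] Matrix.frobeniusNormedAddCommGroup Matrix.frobeniusNormedSpace

/-
Expanding the product, the increment is `D = η² G (B A)ᴴ G − η B Bᴴ G − η G Aᴴ A`. Pairing the two
first-order terms with `G` and using cyclicity of the trace gives exactly `⟨G Gᴴ, B Bᴴ⟩` and
`⟨Aᴴ A, Gᴴ G⟩`, which is where the descent comes from; the second-order term is controlled by
Cauchy–Schwarz. Submultiplicativity of the Frobenius norm and `(x + y + z)² ≤ 3 (x² + y² + z²)`
bound `‖D‖²`.
-/

theorem norm_sub_sub_sq_le {E : Type*} [SeminormedAddCommGroup E] (x y z : E) :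
    ‖x - y - z‖ ^ 2 ≤ 3 * (‖x‖ ^ 2 + ‖y‖ ^ 2 + ‖z‖ ^ 2) := by
  have triangle : ‖x - y - z‖ ≤ ‖x‖ + ‖y‖ + ‖z‖ :=
    (norm_sub_le _ _).trans (by gcongr; exact norm_sub_le x y)
  calc ‖x - y - z‖ ^ 2 ≤ (‖x‖ + ‖y‖ + ‖z‖) ^ 2 := by gcongr
    _ ≤ 3 * (‖x‖ ^ 2 + ‖y‖ ^ 2 + ‖z‖ ^ 2) := by
      linarith [two_mul_le_add_sq ‖x‖ ‖y‖, two_mul_le_add_sq ‖y‖ ‖z‖, two_mul_le_add_sq ‖x‖ ‖z‖]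

section Frobenius

variable {𝕜 l m n p : Type*} [RCLike 𝕜] [Fintype l] [Fintype m] [Fintype n] [Fintype p]

theorem norm_toLp_vec (X : Matrix m n 𝕜) : ‖WithLp.toLp 2 X.vec‖ = ‖X‖ := by
  rw [EuclideanSpace.norm_eq, frobenius_norm_def, Real.sqrt_eq_rpow, Fintype.sum_prod_type_right]
  simp only [vec, Real.rpow_two]

theorem re_trace_conjTranspose_mul_le (X Y : Matrix m n 𝕜) :
    RCLike.re (Xᴴ * Y).trace ≤ ‖X‖ * ‖Y‖ := by
  rw [← star_vec_dotProduct_vec, dotProduct_comm, ← norm_toLp_vec X, ← norm_toLp_vec Y]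
  exact re_inner_le_norm (WithLp.toLp 2 X.vec) (WithLp.toLp 2 Y.vec)

theorem frobenius_norm_mul_mul_le (X : Matrix l m 𝕜) (Y : Matrix m n 𝕜) (Z : Matrix n p 𝕜) :
    ‖X * Y * Z‖ ≤ ‖X‖ * ‖Y‖ * ‖Z‖ :=
  (frobenius_norm_mul _ _).trans (by gcongr; exact frobenius_norm_mul X Y)

theorem frobenius_norm_mul_conjTranspose_mul_le
    (B : Matrix m n 𝕜) (A : Matrix n l 𝕜) (G : Matrix m l 𝕜) :
    ‖G * (B * A)ᴴ * G‖ ≤ ‖A‖ * ‖B‖ * ‖G‖ ^ 2 :=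
  calc ‖G * (B * A)ᴴ * G‖ ≤ ‖G‖ * ‖B * A‖ * ‖G‖ := by
        simpa only [frobenius_norm_conjTranspose] using frobenius_norm_mul_mul_le G (B * A)ᴴ G
    _ ≤ ‖G‖ * (‖B‖ * ‖A‖) * ‖G‖ := by gcongr; exact frobenius_norm_mul B A
    _ = ‖A‖ * ‖B‖ * ‖G‖ ^ 2 := by ring

end Frobenius

section Increment

variable {R α k r d : Type*} [Fintype k] [Fintype r] [Fintype d]

/-- The change of the product `B * A` caused by one simultaneous gradient step of size `η` on both
low-rank factors, where `G` is the gradient with respect to the product, so that the chain rule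
gives the factor gradients `G * Aᴴ` and `Bᴴ * G`. -/
def loraIncrement [CommRing R] [Ring α] [Star α] [Algebra R α] (η : R)
    (B : Matrix k r α) (A : Matrix r d α) (G : Matrix k d α) : Matrix k d α :=
  (B - η • (G * Aᴴ)) * (A - η • (Bᴴ * G)) - B * A

theorem loraIncrement_eq [CommRing R] [Ring α] [StarRing α] [Algebra R α] (η : R)
    (B : Matrix k r α) (A : Matrix r d α) (G : Matrix k d α) :
    loraIncrement η B A G =
      η ^ 2 • (G * (B * A)ᴴ * G) - η • (B * Bᴴ * G) - η • (G * Aᴴ * A) := by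
  simp only [loraIncrement, conjTranspose_mul, Matrix.sub_mul, Matrix.mul_sub, Matrix.smul_mul,
    Matrix.mul_smul, smul_sub, smul_smul, Matrix.mul_assoc, sq]
  abel

variable {𝕜 : Type*} [RCLike 𝕜]

section Bounds

variable (η : ℝ) (B : Matrix k r 𝕜) (A : Matrix r d 𝕜) (G : Matrix k d 𝕜)

theorem norm_loraIncrement_sq_le :
    ‖loraIncrement η B A G‖ ^ 2 ≤ 3 * (η ^ 4 * ‖A‖ ^ 2 * ‖B‖ ^ 2 * ‖G‖ ^ 4 +
      η ^ 2 * ‖A‖ ^ 4 * ‖G‖ ^ 2 + η ^ 2 * ‖B‖ ^ 4 * ‖G‖ ^ 2) := by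
  have norm_smul_sq (c : ℝ) (X : Matrix k d 𝕜) : ‖c • X‖ ^ 2 = c ^ 2 * ‖X‖ ^ 2 := by
    rw [norm_smul, mul_pow, Real.norm_eq_abs, sq_abs]
  have hB : ‖B * Bᴴ * G‖ ≤ ‖B‖ * ‖B‖ * ‖G‖ := by
    simpa only [frobenius_norm_conjTranspose] using frobenius_norm_mul_mul_le B Bᴴ G
  have hA : ‖G * Aᴴ * A‖ ≤ ‖G‖ * ‖A‖ * ‖A‖ := by
    simpa only [frobenius_norm_conjTranspose] using frobenius_norm_mul_mul_le G Aᴴ A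
  calc ‖loraIncrement η B A G‖ ^ 2
      ≤ 3 * ((η ^ 2) ^ 2 * ‖G * (B * A)ᴴ * G‖ ^ 2 + η ^ 2 * ‖B * Bᴴ * G‖ ^ 2 +
          η ^ 2 * ‖G * Aᴴ * A‖ ^ 2) := by
        simpa only [loraIncrement_eq, norm_smul_sq] using norm_sub_sub_sq_le
          (η ^ 2 • (G * (B * A)ᴴ * G)) (η • (B * Bᴴ * G)) (η • (G * Aᴴ * A))
    _ ≤ 3 * ((η ^ 2) ^ 2 * (‖A‖ * ‖B‖ * ‖G‖ ^ 2) ^ 2 + η ^ 2 * (‖B‖ * ‖B‖ * ‖G‖) ^ 2 +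
          η ^ 2 * (‖G‖ * ‖A‖ * ‖A‖) ^ 2) := by
        gcongr
        exact frobenius_norm_mul_conjTranspose_mul_le B A G
    _ = _ := by ring

theorem re_trace_conjTranspose_loraIncrement_mul_le :
    RCLike.re ((loraIncrement η B A G)ᴴ * G).trace ≤ η ^ 2 * (‖A‖ * ‖B‖ * ‖G‖ ^ 3) -
      η * (RCLike.re ((Aᴴ * A)ᴴ * (Gᴴ * G)).trace +
        RCLike.re ((G * Gᴴ)ᴴ * (B * Bᴴ)).trace) := by
  have second_order : RCLike.re ((G * (B * A)ᴴ * G)ᴴ * G).trace ≤ ‖A‖ * ‖B‖ * ‖G‖ ^ 3 :=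
    calc _ ≤ ‖G * (B * A)ᴴ * G‖ * ‖G‖ := re_trace_conjTranspose_mul_le _ _
      _ ≤ ‖A‖ * ‖B‖ * ‖G‖ ^ 2 * ‖G‖ := by
        gcongr
        exact frobenius_norm_mul_conjTranspose_mul_le B A G
      _ = ‖A‖ * ‖B‖ * ‖G‖ ^ 3 := by ring
  have first_order_A : ((G * Aᴴ * A)ᴴ * G).trace = ((Aᴴ * A)ᴴ * (Gᴴ * G)).trace := by
    simp only [conjTranspose_mul, Matrix.mul_assoc]
  have first_order_B : ((B * Bᴴ * G)ᴴ * G).trace = ((G * Gᴴ)ᴴ * (B * Bᴴ)).trace := by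
    rw [trace_mul_comm]
    simp only [conjTranspose_mul, conjTranspose_conjTranspose, Matrix.mul_assoc]
  have expand : RCLike.re ((loraIncrement η B A G)ᴴ * G).trace =
      η ^ 2 * RCLike.re ((G * (B * A)ᴴ * G)ᴴ * G).trace -
        η * RCLike.re ((B * Bᴴ * G)ᴴ * G).trace - η * RCLike.re ((G * Aᴴ * A)ᴴ * G).trace := by
    simp only [loraIncrement_eq, conjTranspose_sub, conjTranspose_smul, star_trivial,
      Matrix.sub_mul, Matrix.smul_mul, trace_sub, trace_smul, map_sub, RCLike.smul_re]
  rw [expand, first_order_A, first_order_B]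
  linarith [mul_le_mul_of_nonneg_left second_order (sq_nonneg η)]

end Bounds

theorem fedsa_lora_one_step_descent_general
    (B : Matrix k r 𝕜) (A : Matrix r d 𝕜) (G : Matrix k d 𝕜)
    {η L CA CB Γ cA cB fW fU : ℝ} (hη : 0 ≤ η) (hL : 0 ≤ L)
    (hA : ‖A‖ ≤ CA) (hB : ‖B‖ ≤ CB) (hG : ‖G‖ ≤ Γ)
    (hcA : cA * ‖G‖ ^ 2 ≤ RCLike.re ((Aᴴ * A)ᴴ * (Gᴴ * G)).trace)
    (hcB : cB * ‖G‖ ^ 2 ≤ RCLike.re ((G * Gᴴ)ᴴ * (B * Bᴴ)).trace)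
    (hsmooth : fU ≤ fW + RCLike.re ((loraIncrement η B A G)ᴴ * G).trace +
      (L / 2) * ‖loraIncrement η B A G‖ ^ 2) :
    fU ≤ fW + η ^ 2 * CA * CB * Γ ^ 3 +
        (3 * L / 2) * (η ^ 4 * CA ^ 2 * CB ^ 2 * Γ ^ 4 + η ^ 2 * CA ^ 4 * Γ ^ 2 +
          η ^ 2 * CB ^ 4 * Γ ^ 2) -
        η * (cA + cB) * ‖G‖ ^ 2 := by
  have hCA : 0 ≤ CA := (norm_nonneg A).trans hA
  have hCB : 0 ≤ CB := (norm_nonneg B).trans hB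
  calc fU
      ≤ fW + (η ^ 2 * (‖A‖ * ‖B‖ * ‖G‖ ^ 3) - η * (RCLike.re ((Aᴴ * A)ᴴ * (Gᴴ * G)).trace +
            RCLike.re ((G * Gᴴ)ᴴ * (B * Bᴴ)).trace)) +
          (L / 2) * (3 * (η ^ 4 * ‖A‖ ^ 2 * ‖B‖ ^ 2 * ‖G‖ ^ 4 + η ^ 2 * ‖A‖ ^ 4 * ‖G‖ ^ 2 +
            η ^ 2 * ‖B‖ ^ 4 * ‖G‖ ^ 2)) := by
        refine hsmooth.trans ?_
        gcongr
        · exact re_trace_conjTranspose_loraIncrement_mul_le η B A G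
        · exact norm_loraIncrement_sq_le η B A G
    _ ≤ fW + (η ^ 2 * (CA * CB * Γ ^ 3) - η * (cA * ‖G‖ ^ 2 + cB * ‖G‖ ^ 2)) +
          (L / 2) * (3 * (η ^ 4 * CA ^ 2 * CB ^ 2 * Γ ^ 4 + η ^ 2 * CA ^ 4 * Γ ^ 2 +
            η ^ 2 * CB ^ 4 * Γ ^ 2)) := by
        gcongr
    _ = _ := by ring

end Increment

/-- One-step descent inequality (Eq. main-ineq-1 in the proof of Theorem 1):
from the smoothness inequality `f_U ≤ f_W + ⟨D, G⟩_F + (L/2)‖D‖_F²` with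
`D = (B − η G Aᵀ)(A − η Bᵀ G) − B A`, one obtains
`f_U ≤ f_W + η² C_A C_B Γ³ + (3L/2)(η⁴ C_A² C_B² Γ⁴ + η² C_A⁴ Γ² + η² C_B⁴ Γ²)
      − η (c_A + c_B) ‖G‖_F²`. -/
theorem fedsa_lora_one_step_descent
    (k r d : ℕ) (B : Matrix (Fin k) (Fin r) ℝ) (A : Matrix (Fin r) (Fin d) ℝ)
    (G : Matrix (Fin k) (Fin d) ℝ) (η L : ℝ) (hη : 0 ≤ η) (hL : 0 ≤ L)
    (CA CB Γ cA cB : ℝ)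
    (hA : ‖A‖ ≤ CA) (hB : ‖B‖ ≤ CB) (hG : ‖G‖ ≤ Γ)
    (hcA : cA * ‖G‖ ^ 2 ≤ ((Aᵀ * A)ᵀ * (Gᵀ * G)).trace)
    (hcB : cB * ‖G‖ ^ 2 ≤ ((G * Gᵀ)ᵀ * (B * Bᵀ)).trace)
    (D : Matrix (Fin k) (Fin d) ℝ)
    (hD : D = (B - η • (G * Aᵀ)) * (A - η • (Bᵀ * G)) - B * A)
    (fW fU : ℝ)
    (hsmooth : fU ≤ fW + (Dᵀ * G).trace + (L / 2) * ‖D‖ ^ 2) :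
    fU ≤ fW + η ^ 2 * CA * CB * Γ ^ 3 +
        (3 * L / 2) * (η ^ 4 * CA ^ 2 * CB ^ 2 * Γ ^ 4 + η ^ 2 * CA ^ 4 * Γ ^ 2 +
          η ^ 2 * CB ^ 4 * Γ ^ 2) -
        η * (cA + cB) * ‖G‖ ^ 2 := by
  subst hD
  simp only [← conjTranspose_eq_transpose_of_trivial] at hcA hcB hsmooth
  exact fedsa_lora_one_step_descent_general B A G hη hL hA hB hG hcA hcB hsmooth
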